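/- arXiv:1705.00394 — 3 statements merged into one kernel-verified Lean document; each statement's English description precedes it below -/
import Mathlib

section
/- For any real numbers p > 0 and q > 0, the function α ↦ (α·p + (1−α)·q − p^α q^{1−α}) / (α(1−α)), defined for α ∉ {0, 1}, tends to p·log(p/q) − p + q as α → 1. In other words, the integrand of the α-divergence D_α[p‖q] converges pointwise, as α → 1, to the integrand of the (unnormalized) Kullback–Leibler divergence KL[p‖q]. -/
open Filter Topology

/-- The integrand of the `α`-divergence tends, as `α → 1`, to the integrand of the
(unnormalized) Kullback–Leibler divergence `KL[p‖q]`. -/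
theorem alpha_divergence_integrand_tendsto_KL_p_q
    (p q : ℝ) (hp : 0 < p) (hq : 0 < q) :
    Tendsto (fun α : ℝ => (α * p + (1 - α) * q - p ^ α * q ^ (1 - α)) / (α * (1 - α)))
      (𝓝[≠] 1) (𝓝 (p * Real.log (p / q) - p + q)) := by
  have h1 : HasDerivAt (fun α : ℝ => 1 - α) (-1) 1 := by
    simpa using (hasDerivAt_id (1:ℝ)).const_sub 1
  have hP : HasDerivAt (fun α : ℝ => p ^ α) (p * Real.log p) 1 := by
    simpa [mul_comm] using (hasDerivAt_id (1:ℝ)).const_rpow hp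
  have hQ : HasDerivAt (fun α : ℝ => q ^ (1 - α)) (-Real.log q) 1 := by
    simpa using h1.const_rpow hq
  have hf : HasDerivAt (fun α : ℝ => α * p + (1 - α) * q - p ^ α * q ^ (1 - α))
      (p - q - (p * Real.log p - p * Real.log q)) 1 := by
    refine ((((hasDerivAt_id (1:ℝ)).mul_const p).add (h1.mul_const q)).sub
      (hP.mul hQ)).congr_deriv ?_
    simp
    ring
  have hs := hasDerivAt_iff_tendsto_slope.1 hf
  have hi : Tendsto (fun α : ℝ => -α⁻¹) (𝓝[≠] 1) (𝓝 (-(1:ℝ)⁻¹)) :=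
    ((tendsto_inv₀ one_ne_zero).neg).mono_left nhdsWithin_le_nhds
  have hm := hs.mul hi
  have he : (p - q - (p * Real.log p - p * Real.log q)) * (-(1:ℝ)⁻¹)
      = p * Real.log (p / q) - p + q := by
    rw [Real.log_div hp.ne' hq.ne']
    ring
  rw [he] at hm
  refine hm.congr fun α => ?_
  rw [slope_def_field]
  have h2 : (1 - α) = -(α - 1) := by ring
  simp only [sub_self, Real.rpow_zero, Real.rpow_one, one_mul, zero_mul, add_zero, mul_one,
    sub_zero]
  rw [div_eq_mul_inv, div_eq_mul_inv, mul_inv, show (1 - α)⁻¹ = -(α - 1)⁻¹ by rw [h2, inv_neg]]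
  ring
end

section
/- Let X be a nonempty finite type, let r : X → ℝ and g : X → ℝ be strictly positive functions, and let α ∈ ℝ \ {0, 1}. For a > 0 define the local α-divergence objective F(a) = ∑_{x∈X} (α·g(x)r(x) + (1−α)·a·r(x) − (g(x)r(x))^α (a·r(x))^{1−α}) / (α(1−α)). Then F is strictly convex on (0, ∞) (its second derivative is F″(a) = a^{−α−1} ∑_x g(x)^α r(x) > 0), its derivative vanishes exactly at a* = (∑_x g(x)^α r(x) / ∑_x r(x))^{1/α}, and a* is the unique global minimizer of F on (0, ∞). -/
open Filter Topology

/-- The local `α`-divergence projection objective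
`F a = D_α[g·r ‖ a·r]` on a nonempty finite type is strictly convex on `(0, ∞)`,
its second derivative is `a^(-α-1) ∑ g^α r > 0`, its derivative vanishes exactly at
`a* = ((∑ g^α r)/(∑ r))^(1/α)`, and `a*` is the unique global minimizer on `(0, ∞)`. -/
theorem local_alpha_divergence_projection
    {X : Type*} [Fintype X] [Nonempty X]
    (r g : X → ℝ) (hr : ∀ x, 0 < r x) (hg : ∀ x, 0 < g x)
    (α : ℝ) (hα0 : α ≠ 0) (hα1 : α ≠ 1)
    (F : ℝ → ℝ)
    (hF : ∀ a ∈ Set.Ioi (0 : ℝ),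
      F a = ∑ x, (α * (g x * r x) + (1 - α) * (a * r x) -
        (g x * r x) ^ α * (a * r x) ^ (1 - α)) / (α * (1 - α))) :
    StrictConvexOn ℝ (Set.Ioi 0) F ∧
    (∀ a ∈ Set.Ioi (0 : ℝ),
      deriv (deriv F) a = a ^ (-α - 1) * ∑ x, g x ^ α * r x ∧
      0 < deriv (deriv F) a) ∧
    (∀ a ∈ Set.Ioi (0 : ℝ),
      (deriv F a = 0 ↔ a = ((∑ x, g x ^ α * r x) / ∑ x, r x) ^ (1 / α))) ∧
    (((∑ x, g x ^ α * r x) / ∑ x, r x) ^ (1 / α) ∈ Set.Ioi (0 : ℝ) ∧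
      ∀ a ∈ Set.Ioi (0 : ℝ),
        a ≠ ((∑ x, g x ^ α * r x) / ∑ x, r x) ^ (1 / α) →
        F (((∑ x, g x ^ α * r x) / ∑ x, r x) ^ (1 / α)) < F a) := by
  have hS : 0 < ∑ x, g x ^ α * r x :=
    Finset.sum_pos (fun x _ => mul_pos (Real.rpow_pos_of_pos (hg x) _) (hr x))
      Finset.univ_nonempty
  have hR : 0 < ∑ x, r x := Finset.sum_pos (fun x _ => hr x) Finset.univ_nonempty
  have hα1' : (1 - α) ≠ 0 := sub_ne_zero.mpr (Ne.symm hα1)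
  have hF2 : ∀ a ∈ Set.Ioi (0 : ℝ), F a = (∑ x, g x * r x) / (1 - α) + (∑ x, r x) / α * a
      - (∑ x, g x ^ α * r x) / (α * (1 - α)) * a ^ (1 - α) := by
    intro a ha
    have ha' : 0 < a := ha
    rw [hF a ha]
    simp only [Finset.sum_div, Finset.sum_mul]
    rw [← Finset.sum_add_distrib, ← Finset.sum_sub_distrib]
    refine Finset.sum_congr rfl fun x _ => ?_
    have e : (g x * r x) ^ α * (a * r x) ^ (1 - α) = g x ^ α * r x * a ^ (1 - α) := by
      rw [Real.mul_rpow (hg x).le (hr x).le, Real.mul_rpow ha'.le (hr x).le]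
      have : r x ^ α * r x ^ (1 - α) = r x := by
        rw [← Real.rpow_add (hr x)]; simp
      calc _ = g x ^ α * (r x ^ α * r x ^ (1 - α)) * a ^ (1 - α) := by ring
        _ = _ := by rw [this]
    rw [e]
    field_simp
  generalize (∑ x, g x ^ α * r x) = S at *
  generalize (∑ x, r x) = R at *
  generalize (∑ x, g x * r x) = G at *
  have hd : ∀ a ∈ Set.Ioi (0 : ℝ), HasDerivAt F (R / α - S / α * a ^ (-α)) a := by
    intro a ha
    have ha' : 0 < a := ha
    have h1 : HasDerivAt (fun a : ℝ => G / (1 - α) + R / α * a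
        - S / (α * (1 - α)) * a ^ (1 - α)) (R / α - S / α * a ^ (-α)) a := by
      have h := ((((hasDerivAt_id a).const_mul (R / α)).const_add (G / (1 - α))).sub
        ((Real.hasDerivAt_rpow_const (p := 1 - α) (Or.inl ha'.ne')).const_mul
          (S / (α * (1 - α)))))
      refine h.congr_deriv ?_
      rw [show 1 - α - 1 = -α by ring]
      field_simp
    exact h1.congr_of_eventuallyEq
      (Filter.eventuallyEq_of_mem (Ioi_mem_nhds ha') fun y hy => hF2 y hy)
  have hd2 : ∀ a ∈ Set.Ioi (0 : ℝ), deriv (deriv F) a = a ^ (-α - 1) * S := by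
    intro a ha
    have ha' : 0 < a := ha
    have h1 : HasDerivAt (fun a : ℝ => R / α - S / α * a ^ (-α)) (a ^ (-α - 1) * S) a := by
      have h := ((Real.hasDerivAt_rpow_const (p := -α) (Or.inl ha'.ne')).const_mul
          (S / α)).const_sub (R / α)
      refine h.congr_deriv ?_
      field_simp
    exact (h1.congr_of_eventuallyEq
      (Filter.eventuallyEq_of_mem (Ioi_mem_nhds ha') fun y hy => (hd y hy).deriv)).deriv
  have hpos : ∀ a ∈ Set.Ioi (0 : ℝ), 0 < deriv (deriv F) a := by
    intro a ha
    rw [hd2 a ha]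
    exact mul_pos (Real.rpow_pos_of_pos ha _) hS
  have hconv : StrictConvexOn ℝ (Set.Ioi 0) F := by
    refine strictConvexOn_of_deriv2_pos (convex_Ioi 0)
      (fun a ha => (hd a ha).continuousAt.continuousWithinAt) ?_
    intro a ha
    rw [interior_Ioi] at ha
    exact hpos a ha
  have hs : (S / R) ^ (1 / α) ∈ Set.Ioi (0 : ℝ) := Real.rpow_pos_of_pos (div_pos hS hR) _
  have hcrit : ∀ a ∈ Set.Ioi (0 : ℝ), (deriv F a = 0 ↔ a = (S / R) ^ (1 / α)) := by
    intro a ha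
    have ha' : 0 < a := ha
    have hp : 0 < a ^ α := Real.rpow_pos_of_pos ha' _
    rw [(hd a ha).deriv, Real.rpow_neg ha'.le, one_div,
      Real.eq_rpow_inv ha'.le (div_pos hS hR).le hα0]
    field_simp
    constructor <;> intro h <;> linarith
  refine ⟨hconv, fun a ha => ⟨hd2 a ha, hpos a ha⟩, hcrit, hs, ?_⟩
  have h0 := (hcrit _ hs).2 rfl
  have hds := hd _ hs
  rw [← hds.deriv, h0] at hds
  generalize (S / R) ^ (1 / α) = s at *
  intro a ha hne
  rcases lt_or_gt_of_ne hne with h | h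
  · have := hconv.slope_lt_of_hasDerivAt ha hs h hds
    rw [slope_def_field, div_neg_iff] at this
    rcases this with hc | hc <;> linarith
  · have := hconv.lt_slope_of_hasDerivAt hs ha h hds
    rw [slope_def_field, div_pos_iff] at this
    rcases this with hc | hc <;> linarith
end

section
/- Let X be a nonempty finite type and let r : X → ℝ and g : X → ℝ be strictly positive functions. Define F₁(b) = ∑_{x∈X} (g(x)r(x)·log(g(x)/b) − g(x)r(x) + b·r(x)) for b > 0. Then the derivative of F₁ satisfies F₁′(b) = −(1/b) ∑_{x∈X} r(x)·(g(x) − b) = (∑_x r(x) / b)·(b − Ē), where Ē = ∑_x g(x)r(x) / ∑_x r(x) is the r-weighted mean of g. In particular F₁′(b) is a strictly positive multiple of −(Ē − b)/b. -/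
/-- Derivative of the unnormalized KL objective `F₁ b = KL[g·r ‖ b·r]`:
`F₁′(b) = -(1/b) ∑ r·(g − b) = ((∑ r)/b)·(b − Ē)` where `Ē = (∑ g·r)/(∑ r)` is the
`r`-weighted mean of `g`; in particular `F₁′(b)` is a strictly positive multiple of
`−(Ē − b)/b`. -/
theorem KL_objective_derivative
    {X : Type*} [Fintype X] [Nonempty X]
    (r g : X → ℝ) (hr : ∀ x, 0 < r x) (hg : ∀ x, 0 < g x)
    (F₁ : ℝ → ℝ)
    (hF₁ : ∀ b ∈ Set.Ioi (0 : ℝ),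
      F₁ b = ∑ x, (g x * r x * Real.log (g x / b) - g x * r x + b * r x)) :
    (∀ b ∈ Set.Ioi (0 : ℝ),
      deriv F₁ b = -(1 / b) * ∑ x, r x * (g x - b) ∧
      deriv F₁ b = ((∑ x, r x) / b) * (b - (∑ x, g x * r x) / ∑ x, r x)) ∧
    ∃ c > (0 : ℝ), ∀ b ∈ Set.Ioi (0 : ℝ),
      deriv F₁ b = c * (-(((∑ x, g x * r x) / ∑ x, r x) - b) / b) := by
  have hS : 0 < ∑ x, r x := Finset.sum_pos (fun x _ => hr x) Finset.univ_nonempty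
  have h1 : ∀ b ∈ Set.Ioi (0 : ℝ), deriv F₁ b = -(1 / b) * ∑ x, r x * (g x - b) := by
    intro b hb
    have hb0 : (0 : ℝ) < b := hb
    have hd : HasDerivAt
        (fun b : ℝ => ∑ x, (g x * r x * (Real.log (g x) - Real.log b) - g x * r x + b * r x))
        (∑ x, (g x * r x * (0 - b⁻¹) - 0 + 1 * r x)) b := by
      apply HasDerivAt.fun_sum
      intro x _
      exact ((((hasDerivAt_const b (Real.log (g x))).sub
        (Real.hasDerivAt_log hb0.ne')).const_mul (g x * r x)).sub
        (hasDerivAt_const b (g x * r x))).add ((hasDerivAt_id b).mul_const (r x))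
    have he : F₁ =ᶠ[nhds b]
        (fun b : ℝ => ∑ x, (g x * r x * (Real.log (g x) - Real.log b) - g x * r x + b * r x)) := by
      filter_upwards [Ioi_mem_nhds hb0] with y hy
      rw [hF₁ y hy]
      refine Finset.sum_congr rfl fun x _ => ?_
      rw [Real.log_div (hg x).ne' (ne_of_gt hy)]
    rw [(hd.congr_of_eventuallyEq he).deriv, Finset.mul_sum]
    refine Finset.sum_congr rfl fun x _ => ?_
    field_simp
    ring
  have h0 : ∀ b : ℝ, ∑ x, r x * (g x - b) = (∑ x, g x * r x) - b * ∑ x, r x := by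
    intro b
    rw [Finset.mul_sum, ← Finset.sum_sub_distrib]
    exact Finset.sum_congr rfl fun x _ => by ring
  refine ⟨fun b hb => ⟨h1 b hb, ?_⟩, ∑ x, r x, hS, fun b hb => ?_⟩
  all_goals
    have hb0 : b ≠ 0 := ne_of_gt hb
    have hS0 := hS.ne'
    rw [h1 b hb, h0]
    field_simp
    try ring
end
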